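/- Let ε ≥ 0 and α > 0, and let u be a positive smooth function on ℝⁿ such that for some c > 0 one has c^{−1}(1+|x|²)^{(2m−n)/2} ≤ u(x) ≤ c(1+|x|²)^{(2m−n)/2} for all x, and u(x) = γ ∫_{ℝⁿ} |x−y|^{2m−n} F_{ε,u}(y) dy for all x ∈ ℝⁿ. Then both of the integrals ∫_{ℝⁿ} f(x)^{(n+2m)/2} u(x) dx and ∫_{ℝⁿ} f(x)^{n + α(n−2m)/2} u(x)^{−α} dx are finite and positive, and (1−ε) ∫_{ℝⁿ} f(x)^{(n+2m)/2} u(x) dx = ∫_{ℝⁿ} f(x)^{n + α(n−2m)/2} u(x)^{−α} dx; in particular ε < 1. -/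

import Mathlib

/-!
Write `f` for the conformal factor of stereographic projection and `I` for the Riesz potential with
kernel `|x - y| ^ (2m - n)`. The hypothesis on `γ` says `γ I (f ^ ((n + 2m) / 2)) =
f ^ ((n - 2m) / 2)` and the equation says `u = γ I F`. Since the kernel is symmetric, pairing the
equation with `f ^ ((n + 2m) / 2)` gives `∫ f ^ ((n + 2m) / 2) u = ∫ f ^ ((n - 2m) / 2) F`, and the
right-hand side is `ε ∫ f ^ ((n + 2m) / 2) u + ∫ f ^ (n + α (n - 2m) / 2) u ^ (-α)`. The growth of
`u` makes both integrands comparable to `f ^ n`, the density of the round sphere, which justifies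
Fubini. A nonzero potential has a measurable density, which makes `F`, and with it `u = γ I F`,
measurable. The argument works for every real order in place of `2m`.
-/

open MeasureTheory

/-- The nonlinearity `F_{ε,u}(x) := ε f(x)^{2m} u(x) +
f(x)^{(n+2m)/2 + α(n−2m)/2} u(x)^{−α}` with `f(x) = 2/(1+|x|²)`. -/
noncomputable def sphF (n m : ℕ) (ε α : ℝ) (u : EuclideanSpace ℝ (Fin n) → ℝ)
    (x : EuclideanSpace ℝ (Fin n)) : ℝ :=
  ε * (2 / (1 + ‖x‖ ^ 2)) ^ (2 * m) * u x +
    (2 / (1 + ‖x‖ ^ 2)) ^ (((n : ℝ) + 2 * m) / 2 + α * ((n : ℝ) - 2 * m) / 2) * u x ^ (-α)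

open Module Asymptotics

theorem isTheta_top_of_bounds {X : Type*} {u w : X → ℝ} {c : ℝ} (hc : 0 < c) (hw : ∀ x, 0 ≤ w x)
    (h : ∀ x, c⁻¹ * w x ≤ u x ∧ u x ≤ c * w x) : u =Θ[⊤] w := by
  have hu : ∀ x, 0 ≤ u x := fun x => (mul_nonneg (inv_pos.2 hc).le (hw x)).trans (h x).1
  refine ⟨isBigO_top.2 ⟨c, fun x => ?_⟩, isBigO_top.2 ⟨c, fun x => ?_⟩⟩ <;>
    rw [Real.norm_of_nonneg (hu x), Real.norm_of_nonneg (hw x)]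
  · exact (h x).2
  · exact (inv_mul_le_iff₀ hc).1 (h x).1

section Integration

variable {X Y : Type*} [MeasurableSpace X] [MeasurableSpace Y] {μ : Measure X} {ν : Measure Y}

theorem integral_pos_of_forall_pos [NeZero μ] {g : X → ℝ} (hg : ∀ x, 0 < g x)
    (hgi : Integrable g μ) : 0 < ∫ x, g x ∂μ := by
  have hsupp : Function.support g = Set.univ := Set.eq_univ_of_forall fun x => (hg x).ne'
  rw [integral_pos_iff_support_of_nonneg (fun x => (hg x).le) hgi, hsupp]
  exact Measure.measure_univ_pos.2 (NeZero.ne μ)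

theorem integral_mul_integral_kernel_comm [SFinite μ] [SFinite ν] {K : X → Y → ℝ} {g : X → ℝ}
    {F : Y → ℝ} (hKm : AEStronglyMeasurable (Function.uncurry K) (μ.prod ν))
    (hgm : AEStronglyMeasurable g μ) (hFm : AEStronglyMeasurable F ν)
    (hK : ∀ x y, 0 ≤ K x y) (hg : ∀ x, 0 ≤ g x) (hKg : ∀ y, Integrable (fun x => K x y * g x) μ)
    (hKgF : Integrable (fun y => (∫ x, K x y * g x ∂μ) * F y) ν) :
    ∫ x, g x * ∫ y, K x y * F y ∂ν ∂μ = ∫ y, (∫ x, K x y * g x ∂μ) * F y ∂ν := by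
  have hint : Integrable (fun z : X × Y => K z.1 z.2 * g z.1 * F z.2) (μ.prod ν) := by
    have hm : AEStronglyMeasurable (fun z : X × Y => K z.1 z.2 * g z.1 * F z.2) (μ.prod ν) :=
      (hKm.mul hgm.comp_fst).mul hFm.comp_snd
    refine (integrable_prod_iff' hm).2
      ⟨.of_forall fun y => (hKg y).mul_const (F y), hKgF.norm.congr (.of_forall fun y => ?_)⟩
    have hnn : ∀ x, 0 ≤ K x y * g x := fun x => mul_nonneg (hK x y) (hg x)
    simp only [norm_mul _ (F y), Real.norm_of_nonneg (hnn _), integral_mul_const,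
      Real.norm_of_nonneg (integral_nonneg hnn)]
  calc ∫ x, g x * ∫ y, K x y * F y ∂ν ∂μ
      = ∫ x, ∫ y, K x y * g x * F y ∂ν ∂μ := by
        simp only [← integral_const_mul, mul_left_comm, mul_assoc]
    _ = ∫ y, ∫ x, K x y * g x * F y ∂μ ∂ν := integral_integral_swap hint
    _ = ∫ y, (∫ x, K x y * g x ∂μ) * F y ∂ν := by simp only [integral_mul_const]

theorem integrable_rpow_mul_rpow_of_isTheta {f u : X → ℝ} {a b p : ℝ} (hf : ∀ x, 0 < f x)
    (hu : ∀ x, 0 < u x) (hfm : AEStronglyMeasurable f μ) (hum : AEStronglyMeasurable u μ)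
    (hfu : u =Θ[⊤] fun x => f x ^ p) (hint : Integrable (fun x => f x ^ (a + p * b)) μ) :
    Integrable (fun x => f x ^ a * u x ^ b) μ := by
  have hub : (fun x => u x ^ b) =Θ[⊤] fun x => f x ^ (p * b) := by
    simpa only [← Real.rpow_mul (hf _).le] using
      hfu.rpow (r := b) (.of_forall fun x => (hu x).le)
        (.of_forall fun x => Real.rpow_nonneg (hf x).le p)
  have hprod : (fun x => f x ^ a * u x ^ b) =Θ[⊤] fun x => f x ^ (a + p * b) := by
    simpa only [Real.rpow_add (hf _)] using (isTheta_refl (fun x => f x ^ a) ⊤).mul hub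
  refine hprod.isBigO.integrable ?_ hint
  exact ((hfm.aemeasurable.pow_const a).mul (hum.aemeasurable.pow_const b)).aestronglyMeasurable

end Integration

section RieszPotential

variable {E : Type*} [NormedAddCommGroup E] [MeasurableSpace E]

/-- The unnormalised Riesz potential `∫ ‖x - y‖ ^ r * g y`, which inverts a constant multiple of a
power of the Laplacian; in dimension `n` the operator of order `s` corresponds to `r = s - n`. -/
noncomputable def rieszPotential (μ : Measure E) (r : ℝ) (g : E → ℝ) (x : E) : ℝ :=
  ∫ y, ‖x - y‖ ^ r * g y ∂μ

theorem rieszPotential_two_mul_sub (μ : Measure E) {n m : ℕ} (hnm : n ≤ 2 * m) (g : E → ℝ)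
    (x : E) : rieszPotential μ (2 * m - n) g x = ∫ y, ‖x - y‖ ^ (2 * m - n) * g y ∂μ := by
  have hcast : (2 * m - n : ℝ) = ((2 * m - n : ℕ) : ℝ) := by simp [Nat.cast_sub hnm]
  simp only [rieszPotential, hcast, Real.rpow_natCast]

-- The Bochner integral of a non-integrable function is `0`.
theorem integrable_of_rieszPotential_ne_zero {μ : Measure E} {r : ℝ} {g : E → ℝ} {x : E}
    (h : rieszPotential μ r g x ≠ 0) : Integrable (fun y => ‖x - y‖ ^ r * g y) μ :=
  not_imp_comm.1 integral_undef h

theorem aestronglyMeasurable_of_rieszPotential_ne_zero [BorelSpace E] {μ : Measure E} {r : ℝ}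
    {g : E → ℝ} {x : E} (h : rieszPotential μ r g x ≠ 0) : AEStronglyMeasurable g μ := by
  classical
  have hquot : AEStronglyMeasurable (fun y => (‖x - y‖ ^ r * g y) / ‖x - y‖ ^ r) μ :=
    (integrable_of_rieszPotential_ne_zero h).aestronglyMeasurable.div₀
      ((continuous_const.sub continuous_id).norm.measurable.pow_const r).aestronglyMeasurable
  have hpiece : g = ({x} : Set E).piecewise (fun _ => g x)
      (fun y => (‖x - y‖ ^ r * g y) / ‖x - y‖ ^ r) := by
    funext y
    rcases eq_or_ne y x with rfl | hyx
    · simp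
    · have hK : ‖x - y‖ ^ r ≠ 0 :=
        (Real.rpow_pos_of_pos (norm_pos_iff.2 (sub_ne_zero.2 hyx.symm)) r).ne'
      rw [Set.piecewise_eq_of_notMem _ _ _ (Set.notMem_singleton_iff.2 hyx),
        mul_div_cancel_left₀ _ hK]
  rw [hpiece]
  exact aestronglyMeasurable_const.piecewise (measurableSet_singleton x) hquot.restrict

theorem aestronglyMeasurable_rieszPotential [BorelSpace E] [SecondCountableTopology E]
    {μ : Measure E} [SFinite μ] (r : ℝ) {g : E → ℝ} (hg : AEStronglyMeasurable g μ) :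
    AEStronglyMeasurable (rieszPotential μ r g) μ := by
  have hK : Measurable (fun z : E × E => ‖z.1 - z.2‖ ^ r) :=
    (measurable_fst.sub measurable_snd).norm.pow_const r
  exact (hK.aestronglyMeasurable.mul hg.comp_snd).integral_prod_right'

theorem integral_mul_rieszPotential_comm [BorelSpace E] [SecondCountableTopology E]
    {μ : Measure E} [SFinite μ] {r : ℝ} {g F : E → ℝ} (hgm : AEStronglyMeasurable g μ)
    (hFm : AEStronglyMeasurable F μ) (hg : ∀ x, 0 ≤ g x)
    (hIg : ∀ x, Integrable (fun y => ‖x - y‖ ^ r * g y) μ)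
    (hIgF : Integrable (fun x => rieszPotential μ r g x * F x) μ) :
    ∫ x, g x * rieszPotential μ r F x ∂μ = ∫ x, rieszPotential μ r g x * F x ∂μ := by
  have hsymm : ∀ x, rieszPotential μ r g x = ∫ y, ‖y - x‖ ^ r * g y ∂μ := fun x => by
    simp only [rieszPotential, norm_sub_rev x]
  have hKg : ∀ x, Integrable (fun y => ‖y - x‖ ^ r * g y) μ := fun x => by
    simpa only [norm_sub_rev x] using hIg x
  simp only [hsymm] at hIgF ⊢
  refine integral_mul_integral_kernel_comm ?_ hgm hFm
    (fun x y => Real.rpow_nonneg (norm_nonneg _) r) hg hKg hIgF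
  exact ((measurable_fst.sub measurable_snd).norm.pow_const r).aestronglyMeasurable

end RieszPotential

section ConformalFactor

variable {E : Type*} [NormedAddCommGroup E]

/-- The conformal factor `f` of inverse stereographic projection: the round metric of the sphere
pulls back to `f ^ 2` times the Euclidean metric. -/
noncomputable def conformalFactor (x : E) : ℝ := 2 / (1 + ‖x‖ ^ 2)

theorem conformalFactor_pos (x : E) : 0 < conformalFactor x := by
  unfold conformalFactor; positivity

theorem continuous_conformalFactor : Continuous (conformalFactor : E → ℝ) :=
  continuous_const.div (by fun_prop) fun x => by positivity

theorem half_one_add_norm_sq_rpow (x : E) (r : ℝ) :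
    ((1 + ‖x‖ ^ 2) / 2) ^ r = conformalFactor x ^ (-r) := by
  rw [Real.rpow_neg (conformalFactor_pos x).le, ← Real.inv_rpow (conformalFactor_pos x).le,
    conformalFactor, inv_div]

theorem one_add_norm_sq_rpow_isTheta (r : ℝ) :
    (fun x : E => (1 + ‖x‖ ^ 2) ^ r) =Θ[⊤] fun x => conformalFactor x ^ (-r) := by
  have hscale : ∀ x : E, (1 + ‖x‖ ^ 2) ^ r = 2 ^ r * conformalFactor x ^ (-r) := fun x => by
    rw [← half_one_add_norm_sq_rpow, ← Real.mul_rpow (by norm_num) (by positivity),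
      mul_div_cancel₀ _ two_ne_zero]
  simp only [hscale]
  exact (isTheta_refl _ _).const_mul_left (Real.rpow_pos_of_pos two_pos r).ne'

theorem integrable_conformalFactor_rpow [NormedSpace ℝ E] [FiniteDimensional ℝ E]
    [MeasurableSpace E] [BorelSpace E] {μ : Measure E} [μ.IsAddHaarMeasure] {r : ℝ}
    (hr : finrank ℝ E < 2 * r) : Integrable (fun x : E => conformalFactor x ^ r) μ := by
  have h := integrable_rpow_neg_one_add_norm_sq (μ := μ) hr
  have hΘ := one_add_norm_sq_rpow_isTheta (E := E) (-(2 * r) / 2)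
  rw [show -(-(2 * r) / 2) = r by ring] at hΘ
  exact hΘ.symm.isBigO.integrable
    (continuous_conformalFactor.measurable.pow_const r).aestronglyMeasurable h

end ConformalFactor

section Nonlinearity

variable {E : Type*} [NormedAddCommGroup E]

/-- The nonlinearity `sphF` for an operator of arbitrary real order `s` in place of `2m`, on a space
of dimension `n`. -/
noncomputable def conformalNonlinearity (n : ℕ) (s ε α : ℝ) (u : E → ℝ) (x : E) : ℝ :=
  ε * conformalFactor x ^ s * u x +
    conformalFactor x ^ ((n + s) / 2 + α * (n - s) / 2) * u x ^ (-α)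

theorem sphF_eq_conformalNonlinearity (n m : ℕ) (ε α : ℝ) (u : EuclideanSpace ℝ (Fin n) → ℝ) :
    sphF n m ε α u = conformalNonlinearity n (2 * m) ε α u := by
  funext x
  have hpow : conformalFactor x ^ (2 * m : ℝ) = conformalFactor x ^ (2 * m) := by
    exact_mod_cast Real.rpow_natCast (conformalFactor x) (2 * m)
  rw [conformalNonlinearity, hpow]
  rfl

theorem conformalFactor_rpow_mul_conformalNonlinearity (n : ℕ) (s ε α : ℝ) (u : E → ℝ) (x : E) :
    conformalFactor x ^ ((n - s) / 2) * conformalNonlinearity n s ε α u x =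
      ε * (conformalFactor x ^ ((n + s) / 2) * u x) +
        conformalFactor x ^ (n + α * (n - s) / 2) * u x ^ (-α) := by
  have hlin : conformalFactor x ^ ((n + s) / 2) =
      conformalFactor x ^ ((n - s) / 2) * conformalFactor x ^ s := by
    rw [← Real.rpow_add (conformalFactor_pos x)]; ring_nf
  have hneg : conformalFactor x ^ (n + α * (n - s) / 2) =
      conformalFactor x ^ ((n - s) / 2) *
        conformalFactor x ^ ((n + s) / 2 + α * (n - s) / 2) := by
    rw [← Real.rpow_add (conformalFactor_pos x)]; ring_nf
  rw [hlin, hneg, conformalNonlinearity]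
  ring

theorem integral_conformalFactor_rpow_mul_eq [MeasurableSpace E] [BorelSpace E]
    [SecondCountableTopology E] {μ : Measure E} [SFinite μ] {n : ℕ} {s ε α γ : ℝ} {u : E → ℝ}
    (hγ : ∀ x : E, conformalFactor x ^ ((n - s) / 2) =
      γ * rieszPotential μ (s - n) (fun y => conformalFactor y ^ ((n + s) / 2)) x)
    (hueq : ∀ x, u x = γ * rieszPotential μ (s - n) (conformalNonlinearity n s ε α u) x)
    (hFm : AEStronglyMeasurable (conformalNonlinearity n s ε α u) μ)
    (hA : Integrable (fun x => conformalFactor x ^ ((n + s) / 2) * u x) μ)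
    (hB : Integrable (fun x => conformalFactor x ^ (n + α * (n - s) / 2) * u x ^ (-α)) μ) :
    ∫ x, conformalFactor x ^ ((n + s) / 2) * u x ∂μ =
      ε * ∫ x, conformalFactor x ^ ((n + s) / 2) * u x ∂μ +
        ∫ x, conformalFactor x ^ (n + α * (n - s) / 2) * u x ^ (-α) ∂μ := by
  set g : E → ℝ := fun x => conformalFactor x ^ ((n + s) / 2)
  set F : E → ℝ := conformalNonlinearity n s ε α u
  have hγI : ∀ x : E, γ * rieszPotential μ (s - n) g x ≠ 0 := fun x => by
    rw [← hγ]; exact (Real.rpow_pos_of_pos (conformalFactor_pos x) _).ne'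
  have hγF : ∀ x, γ * (rieszPotential μ (s - n) g x * F x) =
      ε * (conformalFactor x ^ ((n + s) / 2) * u x) +
        conformalFactor x ^ (n + α * (n - s) / 2) * u x ^ (-α) := fun x => by
    rw [← mul_assoc, ← hγ, conformalFactor_rpow_mul_conformalNonlinearity]
  have hIgF : Integrable (fun x => rieszPotential μ (s - n) g x * F x) μ := by
    refine (integrable_const_mul_iff (left_ne_zero_of_mul (hγI 0)).isUnit _).1 ?_
    simp only [hγF]
    exact (hA.const_mul ε).add hB
  calc ∫ x, g x * u x ∂μ
      = γ * ∫ x, g x * rieszPotential μ (s - n) F x ∂μ := by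
        simp only [← integral_const_mul, mul_left_comm γ, ← hueq]
    _ = γ * ∫ x, rieszPotential μ (s - n) g x * F x ∂μ := by
        rw [integral_mul_rieszPotential_comm
          (continuous_conformalFactor.measurable.pow_const _).aestronglyMeasurable
          hFm (fun x => Real.rpow_nonneg (conformalFactor_pos x).le _)
          (fun x => integrable_of_rieszPotential_ne_zero (right_ne_zero_of_mul (hγI x))) hIgF]
    _ = _ := by
        rw [← integral_const_mul]
        simp only [hγF]
        rw [integral_add (hA.const_mul ε) hB, integral_const_mul]

end Nonlinearity

section GeneralOrder

variable {E : Type*} [NormedAddCommGroup E] [NormedSpace ℝ E] [FiniteDimensional ℝ E]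
  [MeasurableSpace E] [BorelSpace E] {μ : Measure E} [μ.IsAddHaarMeasure] {n : ℕ} {s : ℝ}
  {u : E → ℝ}

theorem integrable_conformalFactor_rpow_mul_rpow (hE : finrank ℝ E = n) (hn : 0 < n)
    (hum : AEStronglyMeasurable u μ) (hu : ∀ x, 0 < u x)
    (hΘ : u =Θ[⊤] fun x => conformalFactor x ^ ((n - s) / 2)) {a b : ℝ}
    (hab : a + (n - s) / 2 * b = n) :
    Integrable (fun x => conformalFactor x ^ a * u x ^ b) μ := by
  refine integrable_rpow_mul_rpow_of_isTheta conformalFactor_pos hu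
    continuous_conformalFactor.aestronglyMeasurable hum hΘ ?_
  rw [hab]
  refine integrable_conformalFactor_rpow ?_
  rw [hE]
  linarith [(Nat.cast_pos (α := ℝ)).2 hn]

theorem stmt15_general (hE : finrank ℝ E = n) (hn : 0 < n) {ε α γ : ℝ}
    (hγ : ∀ x : E, ((1 + ‖x‖ ^ 2) / 2) ^ ((s - n) / 2) =
      γ * rieszPotential μ (s - n) (fun y => conformalFactor y ^ ((n + s) / 2)) x)
    (hbound : ∃ c : ℝ, 0 < c ∧ ∀ x,
      c⁻¹ * (1 + ‖x‖ ^ 2) ^ ((s - n) / 2) ≤ u x ∧ u x ≤ c * (1 + ‖x‖ ^ 2) ^ ((s - n) / 2))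
    (hueq : ∀ x, u x = γ * rieszPotential μ (s - n) (conformalNonlinearity n s ε α u) x) :
    Integrable (fun x => conformalFactor x ^ ((n + s) / 2) * u x) μ ∧
    0 < (∫ x, conformalFactor x ^ ((n + s) / 2) * u x ∂μ) ∧
    Integrable (fun x => conformalFactor x ^ (n + α * (n - s) / 2) * u x ^ (-α)) μ ∧
    0 < (∫ x, conformalFactor x ^ (n + α * (n - s) / 2) * u x ^ (-α) ∂μ) ∧
    (1 - ε) * (∫ x, conformalFactor x ^ ((n + s) / 2) * u x ∂μ) =
      (∫ x, conformalFactor x ^ (n + α * (n - s) / 2) * u x ^ (-α) ∂μ) ∧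
    ε < 1 := by
  obtain ⟨c, hc, hcu⟩ := hbound
  have hexp : -((s - n) / 2) = (n - s) / 2 := by ring
  have hu : ∀ x, 0 < u x := fun x => lt_of_lt_of_le (by positivity) (hcu x).1
  have hFm : AEStronglyMeasurable (conformalNonlinearity n s ε α u) μ :=
    aestronglyMeasurable_of_rieszPotential_ne_zero (x := 0)
      (right_ne_zero_of_mul (hueq 0 ▸ (hu 0).ne'))
  have hum : AEStronglyMeasurable u μ := by
    rw [funext hueq]
    exact (aestronglyMeasurable_rieszPotential _ hFm).const_mul γ
  have hΘ : u =Θ[⊤] fun x => conformalFactor x ^ ((n - s) / 2) := by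
    rw [← hexp]
    exact (isTheta_top_of_bounds hc (fun x => by positivity) hcu).trans
      (one_add_norm_sq_rpow_isTheta _)
  have hA : Integrable (fun x => conformalFactor x ^ ((n + s) / 2) * u x) μ := by
    simpa only [Real.rpow_one] using
      integrable_conformalFactor_rpow_mul_rpow hE hn hum hu hΘ (b := 1) (by ring)
  have hB : Integrable (fun x => conformalFactor x ^ (n + α * (n - s) / 2) * u x ^ (-α)) μ :=
    integrable_conformalFactor_rpow_mul_rpow hE hn hum hu hΘ (by ring)
  have hApos := integral_pos_of_forall_pos
    (fun x => mul_pos (Real.rpow_pos_of_pos (conformalFactor_pos x) _) (hu x)) hA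
  have hBpos := integral_pos_of_forall_pos (fun x => mul_pos
    (Real.rpow_pos_of_pos (conformalFactor_pos x) _) (Real.rpow_pos_of_pos (hu x) _)) hB
  have hid := integral_conformalFactor_rpow_mul_eq
    (by simpa only [half_one_add_norm_sq_rpow, hexp] using hγ) hueq hFm hA hB
  have hAB := sub_eq_of_eq_add' hid
  rw [← one_sub_mul] at hAB
  exact ⟨hA, hApos, hB, hBpos, hAB, sub_pos.1 (pos_of_mul_pos_left (hAB ▸ hBpos) hApos.le)⟩

end GeneralOrder

/-- Integrating the equation: for a positive smooth solution `u` of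
`u(x) = γ ∫ |x−y|^{2m−n} F_{ε,u}(y) dy` with growth `u ≍ (1+|x|²)^{(2m−n)/2}`, the
integrals `∫ f^{(n+2m)/2} u` and `∫ f^{n+α(n−2m)/2} u^{−α}` are finite and positive,
`(1−ε) ∫ f^{(n+2m)/2} u = ∫ f^{n+α(n−2m)/2} u^{−α}`, and in particular `ε < 1`. -/
theorem stmt15 (n m : ℕ) (hn : 3 ≤ n) (hodd : Odd n) (hmn : n < 2 * m)
    (ε : ℝ) (hε : 0 ≤ ε) (α : ℝ) (hα : 0 < α)
    (γ : ℝ) (hγ : 0 < γ)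
    (hγeq : ∀ x : EuclideanSpace ℝ (Fin n),
      ((1 + ‖x‖ ^ 2) / 2) ^ ((2 * (m : ℝ) - n) / 2) =
        γ * ∫ y, ‖x - y‖ ^ (2 * m - n) * (2 / (1 + ‖y‖ ^ 2)) ^ (((n : ℝ) + 2 * m) / 2))
    (u : EuclideanSpace ℝ (Fin n) → ℝ) (husm : ContDiff ℝ (⊤ : ℕ∞) u)
    (hupos : ∀ x, 0 < u x)
    (hbound : ∃ c : ℝ, 0 < c ∧ ∀ x,
      c⁻¹ * (1 + ‖x‖ ^ 2) ^ ((2 * (m : ℝ) - n) / 2) ≤ u x ∧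
        u x ≤ c * (1 + ‖x‖ ^ 2) ^ ((2 * (m : ℝ) - n) / 2))
    (hueq : ∀ x, u x = γ * ∫ y, ‖x - y‖ ^ (2 * m - n) * sphF n m ε α u y) :
    Integrable (fun x : EuclideanSpace ℝ (Fin n) =>
      (2 / (1 + ‖x‖ ^ 2)) ^ (((n : ℝ) + 2 * m) / 2) * u x) ∧
    0 < (∫ x : EuclideanSpace ℝ (Fin n),
      (2 / (1 + ‖x‖ ^ 2)) ^ (((n : ℝ) + 2 * m) / 2) * u x) ∧
    Integrable (fun x : EuclideanSpace ℝ (Fin n) =>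
      (2 / (1 + ‖x‖ ^ 2)) ^ ((n : ℝ) + α * ((n : ℝ) - 2 * m) / 2) * u x ^ (-α)) ∧
    0 < (∫ x : EuclideanSpace ℝ (Fin n),
      (2 / (1 + ‖x‖ ^ 2)) ^ ((n : ℝ) + α * ((n : ℝ) - 2 * m) / 2) * u x ^ (-α)) ∧
    (1 - ε) * (∫ x : EuclideanSpace ℝ (Fin n),
        (2 / (1 + ‖x‖ ^ 2)) ^ (((n : ℝ) + 2 * m) / 2) * u x) =
      (∫ x : EuclideanSpace ℝ (Fin n),
        (2 / (1 + ‖x‖ ^ 2)) ^ ((n : ℝ) + α * ((n : ℝ) - 2 * m) / 2) * u x ^ (-α)) ∧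
    ε < 1 := by
  simp only [sphF_eq_conformalNonlinearity, ← rieszPotential_two_mul_sub volume hmn.le] at hγeq hueq
  exact stmt15_general finrank_euclideanSpace_fin (by lia) hγeq hbound hueq
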